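/- Let d ≥ 1, ℓ ∈ ℕ with ℓ ≥ 1, and β satisfy (ℓ−1)d/(2ℓ) < β < d/2. Then for every n ∈ ℤ^d, ∑_{n = n₁ + ⋯ + n_ℓ} ∏_{j=1}^ℓ ⟨n_j⟩^{−2β} ≲ ⟨n⟩^{−d − 2ℓ(β − d/2)}, where the sum is over all (n₁, …, n_ℓ) ∈ (ℤ^d)^ℓ with n₁ + ⋯ + n_ℓ = n. -/

import Mathlib

/-- Japanese bracket of a lattice point. -/
noncomputable def jbZ {d : ℕ} (n : Fin d → ℤ) : ℝ :=
  Real.sqrt (1 + ∑ i, ((n i : ℝ)) ^ 2)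

open scoped ENNReal

section JapaneseBracket

variable {d : ℕ}

lemma one_le_jbZ (n : Fin d → ℤ) : 1 ≤ jbZ n := by
  have h : 0 ≤ ∑ i, ((n i : ℝ)) ^ 2 := Finset.sum_nonneg fun i _ => sq_nonneg _
  exact Real.one_le_sqrt.2 (by linarith)

lemma jbZ_pos (n : Fin d → ℤ) : 0 < jbZ n := one_pos.trans_le (one_le_jbZ n)

lemma abs_le_jbZ (n : Fin d → ℤ) (i : Fin d) : |(n i : ℝ)| ≤ jbZ n := by
  apply Real.abs_le_sqrt
  have := Finset.single_le_sum (f := fun i => ((n i : ℝ)) ^ 2) (fun i _ => sq_nonneg _)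
    (Finset.mem_univ i)
  linarith

lemma jbZ_add_le (m n : Fin d → ℤ) : jbZ (m + n) ≤ jbZ m + jbZ n := by
  have hm : jbZ m ^ 2 = 1 + ∑ i, ((m i : ℝ)) ^ 2 := Real.sq_sqrt (by positivity)
  have hn : jbZ n ^ 2 = 1 + ∑ i, ((n i : ℝ)) ^ 2 := Real.sq_sqrt (by positivity)
  have hcs : ∑ i, (m i : ℝ) * n i ≤ jbZ m * jbZ n := by
    refine (Real.sum_mul_le_sqrt_mul_sqrt _ _ _).trans ?_
    unfold jbZ
    gcongr <;> linarith
  refine Real.sqrt_le_iff.2 ⟨(add_pos (jbZ_pos m) (jbZ_pos n)).le, ?_⟩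
  have : ∑ i, (((m + n) i : ℤ) : ℝ) ^ 2
      = ∑ i, ((m i : ℝ)) ^ 2 + 2 * ∑ i, (m i : ℝ) * n i + ∑ i, ((n i : ℝ)) ^ 2 := by
    rw [Finset.mul_sum, ← Finset.sum_add_distrib, ← Finset.sum_add_distrib]
    refine Finset.sum_congr rfl fun i _ => ?_
    simp only [Pi.add_apply]
    push_cast
    ring
  rw [this]
  nlinarith

/-- The number of lattice points with bracket at most `r` is at most `(3r)^d`. -/
lemma tsum_indicator_jbZ_le (r : ℝ) (hr : 0 < r) :
    ∑' m : Fin d → ℤ, (if jbZ m ≤ r then 1 else 0 : ℝ≥0∞) ≤ ENNReal.ofReal ((3 * r) ^ (d : ℝ)) := by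
  classical
  rcases lt_or_ge r 1 with h | h
  · have : ∀ m : Fin d → ℤ, ¬ jbZ m ≤ r := fun m => not_le.2 (h.trans_le (one_le_jbZ m))
    simp [this]
  · set s : Finset (Fin d → ℤ) := Fintype.piFinset fun _ => Finset.Icc (-⌊r⌋) ⌊r⌋ with hs
    have hmem : ∀ m : Fin d → ℤ, jbZ m ≤ r → m ∈ s := by
      intro m hm
      rw [hs, Fintype.mem_piFinset]
      intro i
      have := abs_le.1 ((abs_le_jbZ m i).trans hm)
      rw [Finset.mem_Icc]
      refine ⟨neg_le.1 (Int.le_floor.2 ?_), Int.le_floor.2 this.2⟩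
      push_cast
      linarith
    rw [tsum_eq_sum (s := s) fun m hm => if_neg fun h' => hm (hmem m h')]
    refine (Finset.sum_le_card_nsmul s _ 1 fun m _ => by split_ifs <;> simp).trans ?_
    rw [nsmul_one, Real.rpow_natCast, ← ENNReal.ofReal_natCast]
    apply ENNReal.ofReal_le_ofReal
    have hf : 0 ≤ ⌊r⌋ := Int.floor_nonneg.2 hr.le
    have hcard : s.card = (2 * ⌊r⌋ + 1).toNat ^ d := by
      rw [hs, Fintype.card_piFinset_const, Int.card_Icc]
      congr 2
      ring
    rw [hcard]
    push_cast
    gcongr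
    have : (((2 * ⌊r⌋ + 1).toNat : ℤ) : ℝ) = 2 * ⌊r⌋ + 1 := by
      rw [Int.toNat_of_nonneg (by omega)]
      push_cast
      ring
    rw [Int.cast_natCast] at this
    rw [this]
    linarith [Int.floor_le r]

/-- Summation over geometric shells `q ^ k * ρ / 2 ≤ ⟨m⟩ ≤ q ^ k * ρ`. -/
lemma tsum_shells_le (a q : ℝ) (ha : 0 < a) (hq : 0 < q) (hqa : q ^ ((d : ℝ) - a) < 1) :
    ∃ C : ℝ≥0∞, C ≠ ∞ ∧ ∀ ρ : ℝ, 0 < ρ → ∀ S : (Fin d → ℤ) → Prop, ∀ [DecidablePred S],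
      (∀ m, S m → ∃ k : ℕ, q ^ k * ρ / 2 ≤ jbZ m ∧ jbZ m ≤ q ^ k * ρ) →
      ∑' m : Fin d → ℤ, (if S m then ENNReal.ofReal (jbZ m ^ (-a)) else 0)
        ≤ C * ENNReal.ofReal (ρ ^ ((d : ℝ) - a)) := by
  have hgeo : ∑' k : ℕ, ENNReal.ofReal (q ^ ((d : ℝ) - a)) ^ k ≠ ∞ := by
    rw [ENNReal.tsum_geometric]
    refine ENNReal.inv_ne_top.2 (tsub_pos_of_lt ?_).ne'
    simpa using (ENNReal.ofReal_lt_ofReal_iff one_pos).2 hqa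
  refine ⟨ENNReal.ofReal (2 ^ a * 3 ^ (d : ℝ)) * ∑' k : ℕ, ENNReal.ofReal (q ^ ((d : ℝ) - a)) ^ k,
    ENNReal.mul_ne_top ENNReal.ofReal_ne_top hgeo, ?_⟩
  intro ρ hρ S _ hS
  have hpos : ∀ k : ℕ, 0 < q ^ k * ρ := fun k => by positivity
  calc ∑' m : Fin d → ℤ, (if S m then ENNReal.ofReal (jbZ m ^ (-a)) else 0)
      ≤ ∑' m : Fin d → ℤ, ∑' k : ℕ, ENNReal.ofReal ((q ^ k * ρ / 2) ^ (-a)) *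
          (if jbZ m ≤ q ^ k * ρ then 1 else 0) := by
        refine ENNReal.tsum_le_tsum fun m => ?_
        split_ifs with h
        · obtain ⟨k, hk1, hk2⟩ := hS m h
          refine le_trans ?_ (ENNReal.le_tsum k)
          rw [if_pos hk2, mul_one]
          apply ENNReal.ofReal_le_ofReal
          exact Real.rpow_le_rpow_of_nonpos (half_pos (hpos k)) hk1 (by linarith)
        · exact zero_le
    _ = ∑' k : ℕ, ENNReal.ofReal ((q ^ k * ρ / 2) ^ (-a)) *
          ∑' m : Fin d → ℤ, (if jbZ m ≤ q ^ k * ρ then 1 else 0) := by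
        rw [ENNReal.tsum_comm]
        simp_rw [ENNReal.tsum_mul_left]
    _ ≤ ∑' k : ℕ, ENNReal.ofReal (2 ^ a * 3 ^ (d : ℝ)) * ENNReal.ofReal (q ^ ((d : ℝ) - a)) ^ k *
          ENNReal.ofReal (ρ ^ ((d : ℝ) - a)) := by
        refine ENNReal.tsum_le_tsum fun k => ?_
        refine (mul_le_mul_right (tsum_indicator_jbZ_le _ (hpos k)) _).trans (le_of_eq ?_)
        have h2 := half_pos (hpos k)
        rw [← ENNReal.ofReal_pow (by positivity), ← ENNReal.ofReal_mul (by positivity),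
          ← ENNReal.ofReal_mul (by positivity), ← ENNReal.ofReal_mul (by positivity)]
        congr 1
        rw [Real.div_rpow (hpos k).le two_pos.le, Real.mul_rpow three_pos.le (hpos k).le,
          Real.rpow_neg two_pos.le, div_inv_eq_mul, ← Real.rpow_natCast (q ^ _),
          ← Real.rpow_mul hq.le,
          mul_comm _ (k : ℝ), Real.rpow_mul hq.le, Real.rpow_natCast q k, mul_assoc (_ * _),
          ← Real.mul_rpow (by positivity) hρ.le, sub_eq_neg_add, Real.rpow_add (hpos k)]
        ring
    _ = _ := by rw [ENNReal.tsum_mul_right, ENNReal.tsum_mul_left]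

lemma tsum_jbZ_le_of_lt (a : ℝ) (ha : 0 < a) (had : a < d) :
    ∃ C : ℝ≥0∞, C ≠ ∞ ∧ ∀ R : ℝ, 0 < R →
      ∑' m : Fin d → ℤ, (if jbZ m ≤ R then ENNReal.ofReal (jbZ m ^ (-a)) else 0)
        ≤ C * ENNReal.ofReal (R ^ ((d : ℝ) - a)) := by
  obtain ⟨C, hC, h⟩ := tsum_shells_le (d := d) a (1 / 2) ha (by norm_num)
    (Real.rpow_lt_one (by norm_num) (by norm_num) (by linarith))
  refine ⟨C, hC, fun R hR => h R hR _ fun m hm => ?_⟩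
  have hm0 := jbZ_pos m
  obtain ⟨k, hk1, hk2⟩ := exists_nat_pow_near (one_le_div hm0 |>.2 hm) (one_lt_two)
  refine ⟨k, ?_, ?_⟩
  · rw [div_lt_iff₀ hm0, pow_succ] at hk2
    rw [one_div, inv_pow, inv_mul_eq_div, div_div, div_le_iff₀ (by positivity)]
    linarith
  · rw [le_div_iff₀ hm0] at hk1
    rw [one_div, inv_pow, inv_mul_eq_div, le_div_iff₀ (by positivity)]
    linarith

lemma tsum_jbZ_le_of_gt (a : ℝ) (ha : 0 < a) (had : d < a) :
    ∃ C : ℝ≥0∞, C ≠ ∞ ∧ ∀ R : ℝ, 0 < R →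
      ∑' m : Fin d → ℤ, (if R ≤ jbZ m then ENNReal.ofReal (jbZ m ^ (-a)) else 0)
        ≤ C * ENNReal.ofReal ((2 * R) ^ ((d : ℝ) - a)) := by
  obtain ⟨C, hC, h⟩ := tsum_shells_le (d := d) a 2 ha (by norm_num)
    (Real.rpow_lt_one_of_one_lt_of_neg one_lt_two (by linarith))
  refine ⟨C, hC, fun R hR => h (2 * R) (by positivity) _ fun m hm => ?_⟩
  obtain ⟨k, hk1, hk2⟩ := exists_nat_pow_near (one_le_div hR |>.2 hm) (one_lt_two)
  rw [div_lt_iff₀ hR, pow_succ] at hk2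
  rw [le_div_iff₀ hR] at hk1
  exact ⟨k, by linarith, by linarith⟩

/-- The convolution of two subcritical powers, split according to which factor is small. -/
lemma rpow_mul_rpow_le_split {x y R a b : ℝ} (hx : 0 < x) (hy : 0 < y) (hR : 0 < R)
    (hxy : R ≤ x + y) (ha : 0 < a) (hb : 0 < b) :
    x ^ (-a) * y ^ (-b) ≤
      (R / 2) ^ (-b) * (if x ≤ R / 2 then x ^ (-a) else 0) +
      (R / 2) ^ (-a) * (if y ≤ R / 2 then y ^ (-b) else 0) +
      (if R / 2 ≤ x then x ^ (-(a + b)) else 0) + (if R / 2 ≤ y then y ^ (-(a + b)) else 0) := by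
  have n1 : 0 ≤ (R / 2) ^ (-b) * (if x ≤ R / 2 then x ^ (-a) else 0) := by positivity
  have n2 : 0 ≤ (R / 2) ^ (-a) * (if y ≤ R / 2 then y ^ (-b) else 0) := by positivity
  have n3 : 0 ≤ (if R / 2 ≤ x then x ^ (-(a + b)) else 0) := by positivity
  have n4 : 0 ≤ (if R / 2 ≤ y then y ^ (-(a + b)) else 0) := by positivity
  rcases le_or_gt x (R / 2) with h | h
  · have : x ^ (-a) * y ^ (-b) ≤ (R / 2) ^ (-b) * (if x ≤ R / 2 then x ^ (-a) else 0) := by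
      rw [if_pos h, mul_comm]
      gcongr ?_ * _
      exact Real.rpow_le_rpow_of_nonpos (by positivity) (by linarith) (by linarith)
    linarith
  rcases le_or_gt y (R / 2) with h' | h'
  · have : x ^ (-a) * y ^ (-b) ≤ (R / 2) ^ (-a) * (if y ≤ R / 2 then y ^ (-b) else 0) := by
      rw [if_pos h']
      gcongr ?_ * _
      exact Real.rpow_le_rpow_of_nonpos (by positivity) (by linarith) (by linarith)
    linarith
  rcases le_total x y with hc | hc
  · have : x ^ (-a) * y ^ (-b) ≤ (if R / 2 ≤ x then x ^ (-(a + b)) else 0) := by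
      rw [if_pos h.le, neg_add, Real.rpow_add hx]
      gcongr _ * ?_
      exact Real.rpow_le_rpow_of_nonpos hx hc (by linarith)
    linarith
  · have : x ^ (-a) * y ^ (-b) ≤ (if R / 2 ≤ y then y ^ (-(a + b)) else 0) := by
      rw [if_pos h'.le, neg_add, Real.rpow_add hy]
      gcongr ?_ * _
      exact Real.rpow_le_rpow_of_nonpos hy hc (by linarith)
    linarith

/-- `∑_{n = n₁ + n₂} ⟨n₁⟩^{-a} ⟨n₂⟩^{-b} ≲ ⟨n⟩^{d - a - b}` for `0 < a, b < d < a + b`. -/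
lemma convolution_bound (a b : ℝ) (ha : 0 < a) (hb : 0 < b) (had : a < d) (hbd : b < d)
    (hab : d < a + b) :
    ∃ C : ℝ≥0∞, C ≠ ∞ ∧ ∀ n : Fin d → ℤ,
      ∑' m : Fin d → ℤ, ENNReal.ofReal (jbZ m ^ (-a)) * ENNReal.ofReal (jbZ (n - m) ^ (-b))
        ≤ C * ENNReal.ofReal (jbZ n ^ ((d : ℝ) - a - b)) := by
  obtain ⟨A, hA, hA'⟩ := tsum_jbZ_le_of_lt a ha had
  obtain ⟨B, hB, hB'⟩ := tsum_jbZ_le_of_lt b hb hbd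
  obtain ⟨D, hD, hD'⟩ := tsum_jbZ_le_of_gt (a + b) (by linarith) hab
  set c := ENNReal.ofReal ((1 / 2) ^ ((d : ℝ) - a - b)) with hc
  have hc' : c ≠ ∞ := ENNReal.ofReal_ne_top
  refine ⟨c * A + c * B + D + D, by finiteness, fun n => ?_⟩
  have hR : 0 < jbZ n / 2 := half_pos (jbZ_pos n)
  have shift : ∀ f : (Fin d → ℤ) → ℝ≥0∞, ∑' m, f (n - m) = ∑' m, f m := fun f =>
    (Equiv.subLeft n).tsum_eq f
  have scale : ∀ u v : ℝ, u + v = a + b → ∀ K : ℝ≥0∞, ENNReal.ofReal ((jbZ n / 2) ^ (-v)) *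
      (K * ENNReal.ofReal ((jbZ n / 2) ^ ((d : ℝ) - u))) =
      c * K * ENNReal.ofReal (jbZ n ^ ((d : ℝ) - a - b)) := by
    intro u v huv K
    rw [mul_left_comm, ← ENNReal.ofReal_mul (by positivity), ← Real.rpow_add hR, mul_comm c,
      mul_assoc, hc, ← ENNReal.ofReal_mul (by positivity),
      ← Real.mul_rpow (by norm_num) (jbZ_pos n).le]
    congr 3
    · ring
    · linarith
  calc _ ≤ ∑' m : Fin d → ℤ,
        (ENNReal.ofReal ((jbZ n / 2) ^ (-b)) *
            (if jbZ m ≤ jbZ n / 2 then ENNReal.ofReal (jbZ m ^ (-a)) else 0) +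
          ENNReal.ofReal ((jbZ n / 2) ^ (-a)) *
            (if jbZ (n - m) ≤ jbZ n / 2 then ENNReal.ofReal (jbZ (n - m) ^ (-b)) else 0) +
          (if jbZ n / 2 ≤ jbZ m then ENNReal.ofReal (jbZ m ^ (-(a + b))) else 0) +
          (if jbZ n / 2 ≤ jbZ (n - m) then ENNReal.ofReal (jbZ (n - m) ^ (-(a + b))) else 0)) := by
        refine ENNReal.tsum_le_tsum fun m => ?_
        have hm := jbZ_pos m
        have hnm := jbZ_pos (n - m)
        have htri : jbZ n ≤ jbZ m + jbZ (n - m) := by simpa using jbZ_add_le m (n - m)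
        have key := ENNReal.ofReal_le_ofReal
          (rpow_mul_rpow_le_split hm hnm (jbZ_pos n) htri ha hb)
        rw [ENNReal.ofReal_mul (by positivity), ENNReal.ofReal_add (by positivity) (by positivity),
          ENNReal.ofReal_add (by positivity) (by positivity),
          ENNReal.ofReal_add (by positivity) (by positivity),
          ENNReal.ofReal_mul (by positivity), ENNReal.ofReal_mul (by positivity)] at key
        simpa only [apply_ite ENNReal.ofReal, ENNReal.ofReal_zero] using key
    _ ≤ c * A * ENNReal.ofReal (jbZ n ^ ((d : ℝ) - a - b)) +
          c * B * ENNReal.ofReal (jbZ n ^ ((d : ℝ) - a - b)) +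
          D * ENNReal.ofReal (jbZ n ^ ((d : ℝ) - a - b)) +
          D * ENNReal.ofReal (jbZ n ^ ((d : ℝ) - a - b)) := by
        have hD'' := hD' _ hR
        rw [mul_div_cancel₀ _ two_ne_zero, ← sub_sub] at hD''
        rw [ENNReal.tsum_add, ENNReal.tsum_add, ENNReal.tsum_add, ENNReal.tsum_mul_left,
          ENNReal.tsum_mul_left,
          shift fun m => if jbZ m ≤ jbZ n / 2 then ENNReal.ofReal (jbZ m ^ (-b)) else 0,
          shift fun m => if jbZ n / 2 ≤ jbZ m then ENNReal.ofReal (jbZ m ^ (-(a + b))) else 0,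
          ← scale a b rfl A, ← scale b a (add_comm b a) B]
        gcongr
        · exact hA' _ hR
        · exact hB' _ hR
    _ = _ := by ring

/-- Peeling off the first summand of an iterated convolution. -/
lemma tsum_fin_succ_convolution {G : Type*} [AddCommGroup G] [DecidableEq G] (f : G → ℝ≥0∞)
    (l : ℕ) (n : G) :
    ∑' v : Fin (l + 1) → G, (if ∑ j, v j = n then ∏ j, f (v j) else 0) =
      ∑' m : G, f m * ∑' v : Fin l → G, (if ∑ j, v j = n - m then ∏ j, f (v j) else 0) := by
  rw [← (Fin.consEquiv fun _ : Fin (l + 1) => G).tsum_eq, ENNReal.tsum_prod']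
  refine tsum_congr fun m => ?_
  rw [← ENNReal.tsum_mul_left]
  refine tsum_congr fun v => ?_
  simp [Fin.consEquiv, Fin.sum_univ_succ, Fin.prod_univ_succ, eq_sub_iff_add_eq, add_comm m]

lemma iterated_convolution_bound_ennreal (a : ℝ) (had : a < d) (l : ℕ) (hl : 1 ≤ l)
    (hpos : 0 < (d : ℝ) - l * (d - a)) :
    ∃ C : ℝ≥0∞, C ≠ ∞ ∧ ∀ n : Fin d → ℤ,
      ∑' v : Fin l → (Fin d → ℤ),
          (if ∑ j, v j = n then ∏ j, ENNReal.ofReal (jbZ (v j) ^ (-a)) else 0)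
        ≤ C * ENNReal.ofReal (jbZ n ^ (-((d : ℝ) - l * (d - a)))) := by
  induction l, hl using Nat.le_induction with
  | base =>
    refine ⟨1, ENNReal.one_ne_top, fun n => ?_⟩
    rw [← (Equiv.funUnique (Fin 1) (Fin d → ℤ)).symm.tsum_eq]
    simp
  | succ l hl ih =>
    push_cast at hpos
    have hl' : (1 : ℝ) ≤ l := by exact_mod_cast hl
    obtain ⟨C, hC, h⟩ := ih (by linarith)
    obtain ⟨K, hK, h'⟩ := convolution_bound (d := d) a (d - l * (d - a)) (by nlinarith)
      (by linarith) had (by nlinarith) (by linarith)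
    refine ⟨C * K, ENNReal.mul_ne_top hC hK, fun n => ?_⟩
    rw [tsum_fin_succ_convolution (fun m => ENNReal.ofReal (jbZ m ^ (-a)))]
    calc _ ≤ ∑' m : Fin d → ℤ, C * (ENNReal.ofReal (jbZ m ^ (-a)) *
            ENNReal.ofReal (jbZ (n - m) ^ (-((d : ℝ) - l * (d - a))))) := by
          refine ENNReal.tsum_le_tsum fun m => ?_
          rw [mul_left_comm]
          gcongr
          exact h (n - m)
      _ ≤ C * (K * ENNReal.ofReal (jbZ n ^ ((d : ℝ) - a - (d - l * (d - a))))) := by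
          rw [ENNReal.tsum_mul_left]
          gcongr
          exact h' n
      _ = _ := by
          rw [mul_assoc]
          congr 5
          push_cast
          ring

end JapaneseBracket

/-- The `ℓ`-fold convolution bound `∑_{n = n₁ + ⋯ + n_ℓ} ∏ ⟨n_j⟩^{-2β}
≲ ⟨n⟩^{-d - 2ℓ(β - d/2)}` for `(ℓ-1)d/(2ℓ) < β < d/2`. -/
theorem iterated_convolution_bound (d l : ℕ) (hd : 1 ≤ d) (hl : 1 ≤ l) (β : ℝ)
    (h1 : ((l : ℝ) - 1) * d / (2 * l) < β) (h2 : β < (d : ℝ) / 2) :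
    ∃ C > 0, ∀ n : Fin d → ℤ,
      (∑' v : Fin l → (Fin d → ℤ),
          if (∑ j, v j) = n then ∏ j, jbZ (v j) ^ (-(2 * β)) else 0)
        ≤ C * jbZ n ^ (-(d : ℝ) - 2 * l * (β - (d : ℝ) / 2)) := by
  have hl' : (0 : ℝ) < l := by exact_mod_cast hl
  rw [div_lt_iff₀ (by positivity)] at h1
  obtain ⟨C, hC, h⟩ := iterated_convolution_bound_ennreal (d := d) (2 * β) (by linarith) l hl
    (by linarith)
  refine ⟨C.toReal + 1, by positivity, fun n => ?_⟩
  have hpow : 0 ≤ jbZ n ^ (-(d : ℝ) - 2 * l * (β - (d : ℝ) / 2)) :=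
    Real.rpow_nonneg (jbZ_pos n).le _
  have hterm : ∀ v : Fin l → (Fin d → ℤ),
      (if ∑ j, v j = n then ∏ j, jbZ (v j) ^ (-(2 * β)) else 0) =
      (if ∑ j, v j = n then ∏ j, ENNReal.ofReal (jbZ (v j) ^ (-(2 * β))) else 0).toReal := by
    intro v
    split_ifs
    · rw [ENNReal.toReal_prod]
      exact Finset.prod_congr rfl fun j _ =>
        (ENNReal.toReal_ofReal (Real.rpow_nonneg (jbZ_pos _).le _)).symm
    · simp
  rw [tsum_congr hterm, ← ENNReal.tsum_toReal_eq fun v => by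
    split_ifs
    · exact ENNReal.prod_ne_top fun j _ => ENNReal.ofReal_ne_top
    · exact ENNReal.zero_ne_top]
  have hn := ENNReal.toReal_mono (ENNReal.mul_ne_top hC ENNReal.ofReal_ne_top) (h n)
  rw [ENNReal.toReal_mul, ENNReal.toReal_ofReal (Real.rpow_nonneg (jbZ_pos n).le _),
    show -((d : ℝ) - l * (d - 2 * β)) = -(d : ℝ) - 2 * l * (β - (d : ℝ) / 2) by ring] at hn
  linarith
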